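/- In the (32,16) polar code with information set I = {11,13,14,15,19,21,22,...,31}, the minimum Hamming weight of a nonzero codeword is 4. -/

import Mathlib

open Matrix Finset

/-- The 2×2 kernel `G₂ = [[1,0],[1,1]]` over `F₂`. -/
def G2 : Matrix (Fin 2) (Fin 2) (ZMod 2) := !![1, 0; 1, 1]

/-- `GN n = G₂^{⊗n}`, the `n`-th Kronecker power of `G₂`. -/
def GN : (n : ℕ) → Matrix (Fin (2 ^ n)) (Fin (2 ^ n)) (ZMod 2)
  | 0 => 1
  | n + 1 =>
    Matrix.reindex (finProdFinEquiv.trans (finCongr (by rw [pow_succ]; ring)))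
      (finProdFinEquiv.trans (finCongr (by rw [pow_succ]; ring)))
      (Matrix.kroneckerMap (· * ·) G2 (GN n))

/-- Hamming weight of a vector over `F₂`. -/
def wt {N : ℕ} (v : Fin N → ZMod 2) : ℕ := (Finset.univ.filter fun j => v j ≠ 0).card

/-- The support of the binary representation of `k`. -/
def bsupp (k : ℕ) : Finset ℕ := (Finset.range k).filter (fun a => k.testBit a = true)

/-- Number of ones in the binary representation of `k`. -/
def popcount (k : ℕ) : ℕ := (bsupp k).card

/-!
Since `G₂^{⊗(n+1)} = G₂ ⊗ G₂^{⊗n}`, a codeword of length `2^(n+1)` has the form `(u + v, v)`, where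
`u` and `v` are the codewords of length `2^n` encoding the two halves of the coefficient vector.
If `u` has a nonzero coefficient vector, then `wt (u + v) + wt v ≥ wt u`; otherwise the weight is
`2 * wt v`. By induction, a nonzero combination of rows `g_i` has weight at least `2^popcount(i)`
for one of the rows `g_i` that occur in it, while `g_i` itself has weight exactly `2^popcount(i)`.
-/

lemma exists_vecMul_eq_of_mem_span_rows {R ι κ : Type*} [Semiring R] [Fintype ι]
    {M : Matrix ι κ R} {I : Set ι} {x : κ → R} (hx : x ∈ Submodule.span R (M.row '' I)) :
    ∃ c : ι → R, (∀ i, c i ≠ 0 → i ∈ I) ∧ c ᵥ* M = x := by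
  obtain ⟨c, hc, rfl⟩ := (Finsupp.mem_span_image_iff_linearCombination R).1 hx
  refine ⟨c, fun i hi => hc (Finsupp.mem_support_iff.2 hi), ?_⟩
  rw [vecMul_eq_sum, Finsupp.linearCombination_apply,
    Finsupp.sum_fintype c (fun i a => a • M.row i) fun i => zero_smul R (M.row i)]
  rfl

/-- The bijection identifying a row or column index of `GN (n + 1)` with a pair consisting of the
index into the leading factor `G2` (the most significant bit) and the index into `GN n`. -/
def blockEquiv (n : ℕ) : Fin 2 × Fin (2 ^ n) ≃ Fin (2 ^ (n + 1)) :=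
  finProdFinEquiv.trans (finCongr (pow_succ' 2 n).symm)

/-- The half of a vector of length `2 ^ (n + 1)` whose indices have most significant bit `a`. -/
def block {α : Type*} {n : ℕ} (x : Fin (2 ^ (n + 1)) → α) (a : Fin 2) : Fin (2 ^ n) → α :=
  fun i => x (blockEquiv n (a, i))

lemma block_ext {α : Type*} {n : ℕ} {x y : Fin (2 ^ (n + 1)) → α}
    (h : ∀ a, block x a = block y a) : x = y := by
  ext k
  obtain ⟨⟨a, i⟩, rfl⟩ := (blockEquiv n).surjective k
  exact congrFun (h a) i

section BinaryDigits

lemma mem_bsupp {k a : ℕ} : a ∈ bsupp k ↔ k.testBit a = true := by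
  simp only [bsupp, mem_filter, mem_range, and_iff_right_iff_imp]
  exact fun h => a.lt_two_pow_self.trans_le (Nat.ge_two_pow_of_testBit h)

lemma bsupp_two_pow_add {n i : ℕ} (hi : i < 2 ^ n) : bsupp (2 ^ n + i) = insert n (bsupp i) := by
  ext a
  rw [mem_insert, mem_bsupp, mem_bsupp]
  rcases lt_trichotomy a n with h | rfl | h
  · rw [Nat.testBit_two_pow_add_gt h]
    simp [h.ne]
  · simp [Nat.testBit_two_pow_add_eq, Nat.testBit_lt_two_pow hi]
  · have hlt : 2 ^ n + i < 2 ^ a := by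
      have hpow : 2 ^ (n + 1) ≤ 2 ^ a := Nat.pow_le_pow_right two_pos h
      omega
    simp [Nat.testBit_lt_two_pow hlt, Nat.testBit_lt_two_pow (show i < 2 ^ a by omega), h.ne']

lemma popcount_two_pow_add {n i : ℕ} (hi : i < 2 ^ n) :
    popcount (2 ^ n + i) = popcount i + 1 := by
  have hn : n ∉ bsupp i := by simp [mem_bsupp, Nat.testBit_lt_two_pow hi]
  rw [popcount, bsupp_two_pow_add hi, card_insert_of_notMem hn, popcount]

lemma popcount_blockEquiv_zero {n : ℕ} (i : Fin (2 ^ n)) :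
    popcount (blockEquiv n (0, i)) = popcount i := by
  simp [blockEquiv]

lemma popcount_blockEquiv_one {n : ℕ} (i : Fin (2 ^ n)) :
    popcount (blockEquiv n (1, i)) = popcount i + 1 := by
  simpa [blockEquiv, add_comm] using popcount_two_pow_add i.isLt

end BinaryDigits

section Weight

lemma wt_eq_hammingNorm {N : ℕ} (x : Fin N → ZMod 2) : wt x = hammingNorm x := rfl

lemma wt_pos_iff {N : ℕ} {x : Fin N → ZMod 2} : 0 < wt x ↔ x ≠ 0 := hammingNorm_pos_iff

@[simp]
lemma wt_zero {N : ℕ} : wt (0 : Fin N → ZMod 2) = 0 := hammingNorm_zero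

lemma wt_le_wt_add_add_wt {N : ℕ} (u v : Fin N → ZMod 2) : wt u ≤ wt (u + v) + wt v := by
  simpa [wt_eq_hammingNorm, hammingDist_eq_hammingNorm, ZModModule.neg_eq_self]
    using hammingDist_triangle u v 0

lemma wt_eq_wt_block_add_wt_block {n : ℕ} (x : Fin (2 ^ (n + 1)) → ZMod 2) :
    wt x = wt (block x 0) + wt (block x 1) := by
  simp only [wt, card_filter]
  rw [← (blockEquiv n).sum_comp, Fintype.sum_prod_type, Fin.sum_univ_two]
  rfl

end Weight

section KroneckerPower

variable {n : ℕ}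

lemma GN_succ_blockEquiv (a b : Fin 2) (i j : Fin (2 ^ n)) :
    GN (n + 1) (blockEquiv n (a, i)) (blockEquiv n (b, j)) = G2 a b * GN n i j := by
  change reindex (blockEquiv n) (blockEquiv n) (kroneckerMap (· * ·) G2 (GN n)) _ _ = _
  simp

lemma block_GN_row (a b : Fin 2) (i : Fin (2 ^ n)) :
    block (GN (n + 1) (blockEquiv n (a, i))) b = G2 a b • GN n i :=
  funext fun j => GN_succ_blockEquiv a b i j

lemma block_vecMul_GN (c : Fin (2 ^ (n + 1)) → ZMod 2) (b : Fin 2) :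
    block (c ᵥ* GN (n + 1)) b = ∑ a, G2 a b • (block c a ᵥ* GN n) := by
  ext j
  simp only [block, vecMul, dotProduct, Finset.sum_apply, Pi.smul_apply, smul_eq_mul]
  rw [← (blockEquiv n).sum_comp, Fintype.sum_prod_type]
  simp only [GN_succ_blockEquiv, mul_sum, mul_left_comm]

lemma wt_vecMul_GN_succ (c : Fin (2 ^ (n + 1)) → ZMod 2) :
    wt (c ᵥ* GN (n + 1)) =
      wt (block c 0 ᵥ* GN n + block c 1 ᵥ* GN n) + wt (block c 1 ᵥ* GN n) := by
  rw [wt_eq_wt_block_add_wt_block, block_vecMul_GN, block_vecMul_GN]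
  simp [G2]

end KroneckerPower

section MinimumWeight

variable {n : ℕ}

theorem wt_GN_row (i : Fin (2 ^ n)) : wt (GN n i) = 2 ^ popcount i := by
  induction n with
  | zero =>
    obtain rfl : i = 0 := Fin.fin_one_eq_zero i
    decide
  | succ n ih =>
    obtain ⟨⟨a, i⟩, rfl⟩ := (blockEquiv n).surjective i
    rw [wt_eq_wt_block_add_wt_block, block_GN_row, block_GN_row]
    match a with
    | 0 => simp [G2, ih, popcount_blockEquiv_zero]
    | 1 => simp [G2, ih, popcount_blockEquiv_one, pow_succ, mul_two]

theorem exists_two_pow_popcount_le_wt_vecMul_GN {c : Fin (2 ^ n) → ZMod 2} (hc : c ≠ 0) :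
    ∃ i, c i ≠ 0 ∧ 2 ^ popcount i ≤ wt (c ᵥ* GN n) := by
  induction n with
  | zero =>
    obtain ⟨i, hi⟩ := Function.ne_iff.1 hc
    obtain rfl : i = 0 := Fin.fin_one_eq_zero i
    refine ⟨0, hi, ?_⟩
    rw [GN, vecMul_one]
    exact wt_pos_iff.2 hc
  | succ n ih =>
    rw [wt_vecMul_GN_succ]
    by_cases h₀ : block c 0 = 0
    · have h₁ : block c 1 ≠ 0 := fun h₁ => hc <| block_ext <| Fin.forall_fin_two.2 ⟨h₀, h₁⟩
      obtain ⟨i, hi, hle⟩ := ih h₁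
      refine ⟨blockEquiv n (1, i), hi, ?_⟩
      rw [popcount_blockEquiv_one, h₀, zero_vecMul, zero_add, pow_succ, mul_two]
      exact add_le_add hle hle
    · obtain ⟨i, hi, hle⟩ := ih h₀
      refine ⟨blockEquiv n (0, i), hi, ?_⟩
      rw [popcount_blockEquiv_zero]
      exact hle.trans (wt_le_wt_add_add_wt _ _)

theorem min_weight_polar_32_16_general {I : Set (Fin (2 ^ n))} {k : ℕ}
    (hk : IsLeast ((fun i : Fin (2 ^ n) => popcount i) '' I) k) :
    IsLeast {w : ℕ | ∃ x ∈ Submodule.span (ZMod 2) ((fun i => GN n i) '' I),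
      x ≠ 0 ∧ wt x = w} (2 ^ k) := by
  constructor
  · obtain ⟨i, hi, rfl⟩ := hk.1
    refine ⟨GN n i, Submodule.subset_span ⟨i, hi, rfl⟩, wt_pos_iff.1 ?_, wt_GN_row i⟩
    rw [wt_GN_row]
    positivity
  · rintro w ⟨x, hx, hx0, rfl⟩
    obtain ⟨c, hcI, rfl⟩ := exists_vecMul_eq_of_mem_span_rows hx
    have hc : c ≠ 0 := fun h => hx0 (by rw [h, zero_vecMul])
    obtain ⟨i, hi, hle⟩ := exists_two_pow_popcount_le_wt_vecMul_GN hc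
    exact (Nat.pow_le_pow_right two_pos (hk.2 ⟨i, hcI i hi, rfl⟩)).trans hle

end MinimumWeight

theorem min_weight_polar_32_16 :
    IsLeast {w : ℕ | ∃ x ∈ Submodule.span (ZMod 2)
        ((fun i => GN 5 i) ''
          ({11, 13, 14, 15, 19, 21, 22, 23, 24, 25, 26, 27, 28, 29, 30, 31} :
            Finset (Fin (2 ^ 5)))),
      x ≠ 0 ∧ wt x = w} 4 := by
  exact min_weight_polar_32_16_general (k := 2)
    ⟨⟨24, by decide, by decide⟩, Set.forall_mem_image.2 (by decide)⟩
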